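/- arXiv:1709.00555 — 5 statements merged into one kernel-verified Lean document; each statement's English description precedes it below -/
import Mathlib

section
/- Let R be a commutative ring, A = R[X] the polynomial ring in one variable, I an ideal of A, w ∈ I, p a prime and m ≥ 0. Then for all r, l ∈ ℕ and every f ∈ I^r one has w^l · (⌊l/p^m⌋)! · (hasseDeriv l f) ∈ I^r. -/
open Polynomial

theorem aux5 {R : Type*} [CommRing R] (I : Ideal (Polynomial R))
    (w : Polynomial R) (hw : w ∈ I) (r : ℕ) :
    ∀ (l : ℕ) (f : Polynomial R), f ∈ I ^ r → w ^ l * Polynomial.hasseDeriv l f ∈ I ^ r := by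
  induction r with
  | zero => intro l f _; simp
  | succ r ih =>
    intro l f hf
    rw [pow_succ'] at hf ⊢
    refine Submodule.mul_induction_on hf ?_ ?_
    · intro a ha b hb
      rw [Polynomial.hasseDeriv_mul, Finset.mul_sum]
      refine Ideal.sum_mem _ ?_
      rintro ⟨i, j⟩ hij
      have hl : i + j = l := by simpa using hij
      have h1 : w ^ i * Polynomial.hasseDeriv i a ∈ I := by
        rcases Nat.eq_zero_or_pos i with h | h
        · subst h; simpa using ha
        · exact Ideal.mul_mem_right _ _ (Ideal.pow_mem_of_mem _ hw _ h)
      have h2 := Ideal.mul_mem_mul h1 (ih j b hb)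
      rw [← hl, pow_add]
      convert h2 using 1
      ring
    · intro x y hx hy
      rw [map_add, mul_add]
      exact Ideal.add_mem _ hx hy

/-- Assertion from the proof of Lemma 2.1.4(ii), for one coordinate on a polynomial ring:
if `I` is an ideal of `A = R[X]` and `w ∈ I`, then for all `r, l ∈ ℕ` and `f ∈ I^r` one has
`w^l · ⌊l/p^m⌋! · ∂^{[l]}(f) ∈ I^r`, where `∂^{[l]}` is the `l`-th Hasse derivative, so that
`⌊l/p^m⌋!·∂^{[l]} = ∂^{⟨l⟩}` is the level-`m` divided differential operator. -/
theorem statement5 {R : Type*} [CommRing R] (I : Ideal (Polynomial R))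
    (w : Polynomial R) (hw : w ∈ I) (p : ℕ) (hp : p.Prime) (m : ℕ)
    (r l : ℕ) (f : Polynomial R) (hf : f ∈ I ^ r) :
    w ^ l * ((Nat.factorial (l / p ^ m) : Polynomial R) * Polynomial.hasseDeriv l f)
      ∈ I ^ r := by
  rw [mul_left_comm]
  exact Ideal.mul_mem_left _ _ (aux5 I w hw r l f hf)
end

section
/- Let I be an ideal of A, w ∈ I, δ ≥ 1 an integer, and let s ∈ I^δ be invertible in K. Then for every ν ∈ ℕ one has s^{ν+1} · w^ν · d^ν(s^{−1}) ∈ I^{νδ}; equivalently, w^ν·d^ν(s^{−1}) ∈ s^{−(ν+1)}·I^{νδ}. -/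
theorem aux_pow {A : Type*} [CommRing A] (e : A → A)
    (hadd : ∀ a b : A, e (a + b) = e a + e b)
    (hleib : ∀ a b : A, e (a * b) = a * e b + b * e a)
    (I : Ideal A) (n : ℕ) : ∀ x ∈ I ^ (n + 1), e x ∈ I ^ n := by
  induction n with
  | zero => intro x _; simp
  | succ n ih =>
    intro x hx
    rw [pow_succ] at hx
    refine Submodule.mul_induction_on hx ?_ ?_
    · intro a ha b hb
      rw [hleib]
      refine Ideal.add_mem _ (Ideal.mul_mem_right _ _ ha) ?_
      rw [pow_succ']
      exact Ideal.mul_mem_mul hb (ih a ha)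
    · intro a b ha hb
      rw [hadd]
      exact Ideal.add_mem _ ha hb

/-- Level-zero case, for a single derivation, of the quantitative claim in the proof of
Lemma 2.1.4(ii): let `A` be a subring of a commutative ring `K`, `d : K → K` a derivation
with `d(A) ⊆ A`, `I` an ideal of `A`, `w ∈ I`, `δ ≥ 1`, and `s ∈ I^δ` invertible in `K`
with inverse `u`. Then for every `ν` one has `s^{ν+1} · w^ν · d^ν(u) ∈ I^{νδ}`. -/
theorem statement8 {K : Type*} [CommRing K] (A : Subring K) (d : K → K)
    (hadd : ∀ a b : K, d (a + b) = d a + d b)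
    (hleib : ∀ a b : K, d (a * b) = a * d b + b * d a)
    (hdA : ∀ a ∈ A, d a ∈ A)
    (I : Ideal A) (w : A) (hw : w ∈ I)
    (δ : ℕ) (hδ : 1 ≤ δ) (s : A) (hs : s ∈ I ^ δ)
    (u : K) (hu : (s : K) * u = 1) (ν : ℕ) :
    ∃ a ∈ I ^ (ν * δ), (s : K) ^ (ν + 1) * (w : K) ^ ν * (d^[ν] u) = (a : K) := by
  obtain ⟨k, rfl⟩ : ∃ k, δ = k + 1 := ⟨δ - 1, by omega⟩
  let e : A → A := fun a => ⟨d a, hdA a a.2⟩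
  have he : ∀ n, ∀ x ∈ I ^ (n + 1), e x ∈ I ^ n := fun n =>
    aux_pow e (fun a b => Subtype.ext (by simp [e, hadd]))
      (fun a b => Subtype.ext (by simp [e, hleib])) I n
  have d1 : d 1 = 0 := by
    have := hleib 1 1
    simpa using this
  have hpow : ∀ (x : K) (n : ℕ), d (x ^ (n + 1)) = (n + 1) * x ^ n * d x := by
    intro x n
    induction n with
    | zero => simp
    | succ n ih =>
      rw [pow_succ, hleib, ih]
      push_cast
      ring
  have key : ∀ n : ℕ, ∃ a ∈ I ^ (n * k), (s : K) ^ (n + 1) * (d^[n] u) = (a : K) := by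
    intro n
    induction n with
    | zero => exact ⟨1, by simp, by simpa using hu⟩
    | succ n ih =>
      obtain ⟨a, ha, h⟩ := ih
      refine ⟨s * e a - (n + 1) * e s * a, Ideal.sub_mem _ ?_ ?_, ?_⟩
      · rcases hm : n * k with _ | m
        · have : (n + 1) * k ≤ k + 1 := by rw [add_mul, hm]; omega
          exact Ideal.mul_mem_right _ _ (Ideal.pow_le_pow_right this hs)
        · rw [hm] at ha
          have h2 := Ideal.mul_mem_mul hs (he m a ha)
          rw [← pow_add] at h2
          have : (n + 1) * k = k + 1 + m := by rw [add_mul, hm]; omega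
          rwa [this]
      · have h2 := Ideal.mul_mem_mul (he k s hs) ha
        rw [← pow_add] at h2
        have : (n + 1) * k = k + n * k := by ring
        rw [this, mul_assoc]
        exact Ideal.mul_mem_left _ _ h2
      · have h3 := congrArg d h
        rw [hleib, hpow] at h3
        rw [Function.iterate_succ_apply']
        have e1 : ((e a : A) : K) = d a := rfl
        have e2 : ((e s : A) : K) = d s := rfl
        push_cast
        rw [e1, e2, ← h3, ← h]
        ring
  obtain ⟨a, ha, h⟩ := key ν
  refine ⟨w ^ ν * a, ?_, ?_⟩
  · have h2 := Ideal.mul_mem_mul (Ideal.pow_mem_pow hw ν) ha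
    rw [← pow_add] at h2
    have : ν * (k + 1) = ν + ν * k := by ring
    rwa [this]
  · push_cast
    rw [← h]
    ring
end

section
/- For every x ∈ C_t and every ν ∈ ℕ one has w^ν · d^ν(x) ∈ C_t. -/
/-- Level-zero case, for a single derivation, of Lemma 2.1.4(ii): let `A` be a subring of a
commutative ring `K`, `d : K → K` a derivation with `d(A) ⊆ A`, `I` an ideal of `A`,
`w ∈ I`, `D ≥ 1` and `t ∈ I^D` invertible in `K`. Let
`C_t = {x ∈ K : ∃ n, t^n·x ∈ I^{nD}}`. Then for every `x ∈ C_t` and every `ν ∈ ℕ` one has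
`w^ν · d^ν(x) ∈ C_t`. -/
theorem statement9 {K : Type*} [CommRing K] (A : Subring K) (d : K → K)
    (hadd : ∀ a b : K, d (a + b) = d a + d b)
    (hleib : ∀ a b : K, d (a * b) = a * d b + b * d a)
    (hdA : ∀ a ∈ A, d a ∈ A)
    (I : Ideal A) (w : A) (hw : w ∈ I)
    (D : ℕ) (hD : 1 ≤ D) (t : A) (ht : t ∈ I ^ D)
    (tinv : K) (htinv : (t : K) * tinv = 1)
    (x : K) (hx : ∃ n : ℕ, ∃ a ∈ I ^ (n * D), (t : K) ^ n * x = (a : K)) (ν : ℕ) :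
    ∃ n : ℕ, ∃ a ∈ I ^ (n * D), (t : K) ^ n * ((w : K) ^ ν * (d^[ν] x)) = (a : K) := by
  have d1 : d 1 = 0 := by
    have h := hleib 1 1
    simp only [one_mul] at h
    exact left_eq_add.mp h
  have hpow : ∀ (s : K) (n : ℕ), s * d (s ^ n) = n * s ^ n * d s := by
    intro s n
    induction n with
    | zero => simp [d1]
    | succ k ih =>
      rw [pow_succ, hleib]
      push_cast
      linear_combination s * ih
  obtain ⟨e, he⟩ : ∃ e : A → A, ∀ a : A, ((e a : A) : K) = d a :=
    ⟨fun a => ⟨d a, hdA a a.2⟩, fun _ => rfl⟩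
  have eadd : ∀ a b : A, e (a + b) = e a + e b := by
    intro a b
    apply Subtype.ext
    push_cast
    simp only [he]
    push_cast
    exact hadd _ _
  have eleib : ∀ a b : A, e (a * b) = a * e b + b * e a := by
    intro a b
    apply Subtype.ext
    push_cast
    simp only [he]
    push_cast
    exact hleib _ _
  have key : ∀ m : ℕ, ∀ a ∈ I ^ m, w * e a ∈ I ^ m := by
    intro m
    induction m with
    | zero => intro a _; simp
    | succ k ih =>
      intro a ha
      rw [pow_succ] at ha ⊢
      refine Submodule.mul_induction_on ha ?_ ?_
      · intro b hb c hc
        have h1 : w * e (b * c) = b * (w * e c) + (w * e b) * c := by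
          rw [eleib]; ring
        rw [h1]
        exact add_mem (Ideal.mul_mem_mul hb (I.mul_mem_right _ hw))
          (Ideal.mul_mem_mul (ih b hb) hc)
      · intro b c hb hc
        rw [eadd, mul_add]
        exact add_mem hb hc
  induction ν with
  | zero => simpa using hx
  | succ ν ih =>
    obtain ⟨n, a, ha, h⟩ := ih
    have hE : I ^ ((n + 1) * D) = I ^ D * I ^ (n * D) := by
      rw [← pow_add]; congr 1; ring
    refine ⟨n + 1, t * (w * e a) - (w * e t) * (n * a) - t * (ν * e w * a), ?_, ?_⟩
    · rw [hE]
      exact sub_mem (sub_mem (Ideal.mul_mem_mul ht (key _ a ha))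
        (Ideal.mul_mem_mul (key _ t ht) (Ideal.mul_mem_left _ _ ha)))
        (Ideal.mul_mem_mul ht (Ideal.mul_mem_left _ _ ha))
    · rw [Function.iterate_succ_apply']
      push_cast
      simp only [he]
      rw [← h, hleib, hleib]
      have h1 := hpow t n
      have h2 := hpow w ν
      generalize d^[ν] x = y at *
      linear_combination (-(w : K) * w ^ ν * y) * h1 - ((t : K) ^ (n + 1) * y) * h2
end

section
/- For every integer i ≥ 1, the map B/ϖ^i·B → E/ϖ^i·E induced by the inclusion B ⊆ E is bijective; equivalently, E = B + ϖ^i·E and B ∩ ϖ^i·E = ϖ^i·B. -/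
open Pointwise

/-- Abstract form of the auxiliary results in Propositions 2.2.7 and 2.2.11 of the paper:
let `𝔬` be a commutative ring, `ϖ ∈ 𝔬`, `V` an `𝔬`-module, and `A ⊆ B`, `A ⊆ Â`
submodules of `V`; set `E = Â + B`. Assume (a) `Â ⊆ A + ϖ^i·Â` for all `i ≥ 1`, and
(b) for `Q ∈ Â` and `i ≥ 1`, `ϖ^i·Q ∈ B` implies `Q ∈ A`. Then for every `i ≥ 1`
the natural map `B/ϖ^i·B → E/ϖ^i·E` is bijective; equivalently, `E = B + ϖ^i·E` and
`B ∩ ϖ^i·E = ϖ^i·B`. -/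
theorem statement11 {𝔬 V : Type*} [CommRing 𝔬] [AddCommGroup V] [Module 𝔬 V]
    (ϖ : 𝔬) (A B Ahat : Submodule 𝔬 V) (hAB : A ≤ B) (hAAhat : A ≤ Ahat)
    (hdense : ∀ i : ℕ, 1 ≤ i → Ahat ≤ A ⊔ (ϖ ^ i • Ahat))
    (hsat : ∀ Q ∈ Ahat, ∀ i : ℕ, 1 ≤ i → ϖ ^ i • Q ∈ B → Q ∈ A)
    (i : ℕ) (hi : 1 ≤ i) :
    Ahat ⊔ B = B ⊔ (ϖ ^ i • (Ahat ⊔ B)) ∧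
    B ⊓ (ϖ ^ i • (Ahat ⊔ B)) = ϖ ^ i • B := by
  constructor
  · apply le_antisymm
    · refine sup_le ?_ le_sup_left
      intro x hx
      obtain ⟨a, ha, y, hy, rfl⟩ := Submodule.mem_sup.1 (hdense i hi hx)
      obtain ⟨q, hq, rfl⟩ := (Submodule.mem_smul_pointwise_iff_exists _ _ _).1 hy
      exact Submodule.add_mem_sup (hAB ha)
        (Submodule.smul_mem_pointwise_smul _ _ _ (Submodule.mem_sup_left hq))
    · refine sup_le le_sup_right ?_
      intro x hx
      obtain ⟨q, hq, rfl⟩ := (Submodule.mem_smul_pointwise_iff_exists _ _ _).1 hx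
      exact Submodule.smul_mem _ _ hq
  · apply le_antisymm
    · rintro x ⟨hxB, hx⟩
      obtain ⟨e, he, rfl⟩ := (Submodule.mem_smul_pointwise_iff_exists _ _ _).1 hx
      obtain ⟨q, hq, b, hb, rfl⟩ := Submodule.mem_sup.1 he
      have h1 : ϖ ^ i • q ∈ B := by
        have h2 : ϖ ^ i • (q + b) - ϖ ^ i • b ∈ B := B.sub_mem hxB (B.smul_mem _ hb)
        rwa [smul_add, add_sub_cancel_right] at h2
      exact Submodule.smul_mem_pointwise_smul _ _ _
        (B.add_mem (hAB (hsat q hq i hi h1)) hb)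
    · intro x hx
      obtain ⟨b, hb, rfl⟩ := (Submodule.mem_smul_pointwise_iff_exists _ _ _).1 hx
      exact ⟨B.smul_mem _ hb,
        Submodule.smul_mem_pointwise_smul _ _ _ (Submodule.mem_sup_right hb)⟩
end

section
/- The set Â + B = {x + y : x ∈ Â, y ∈ B} is a subring of R. -/
/-- Abstract form of the auxiliary result `E = D̂^{(k,m)} + D^{(k,m+1)}` is a ring, from
Proposition 2.2.7(i) of the paper (and of the analogous claim in Proposition 2.2.11): let
`R` be an associative unital ring, `ϖ` a central element, and `A ⊆ B`, `A ⊆ Â` subrings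
of `R` such that (1) every `Q ∈ B` satisfies `ϖ^c·Q ∈ A` for some `c ∈ ℕ`, and (2) every
`P ∈ Â` can be written, for every `c ∈ ℕ`, as `P = P₁ + ϖ^c·R₁` with `P₁ ∈ A`, `R₁ ∈ Â`.
Then the set `Â + B = {x + y : x ∈ Â, y ∈ B}` is a subring of `R`. -/
theorem statement12 {R : Type*} [Ring R] (ϖ : R) (hϖ : ∀ r : R, ϖ * r = r * ϖ)
    (A B Ahat : Subring R) (hAB : A ≤ B) (hAAhat : A ≤ Ahat)
    (h1 : ∀ Q ∈ B, ∃ c : ℕ, ϖ ^ c * Q ∈ A)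
    (h2 : ∀ P ∈ Ahat, ∀ c : ℕ, ∃ P₁ ∈ A, ∃ R₁ ∈ Ahat, P = P₁ + ϖ ^ c * R₁) :
    ∃ S : Subring R, (S : Set R) = {z : R | ∃ x ∈ Ahat, ∃ y ∈ B, z = x + y} := by
  have hc : ∀ (c : ℕ) (r : R), ϖ ^ c * r = r * ϖ ^ c := fun c r =>
    (Commute.pow_left (hϖ r) c)
  have hPQ : ∀ P ∈ Ahat, ∀ Q ∈ B, ∃ x ∈ Ahat, ∃ y ∈ B, P * Q = x + y := by
    intro P hP Q hQ
    obtain ⟨c, hcQ⟩ := h1 Q hQ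
    obtain ⟨P₁, hP₁, R₁, hR₁, rfl⟩ := h2 P hP c
    refine ⟨R₁ * (ϖ ^ c * Q), mul_mem hR₁ (hAAhat hcQ), P₁ * Q, mul_mem (hAB hP₁) hQ, ?_⟩
    rw [add_mul, hc c R₁, mul_assoc, add_comm]
  have hQP : ∀ P ∈ Ahat, ∀ Q ∈ B, ∃ x ∈ Ahat, ∃ y ∈ B, Q * P = x + y := by
    intro P hP Q hQ
    obtain ⟨c, hcQ⟩ := h1 Q hQ
    obtain ⟨P₁, hP₁, R₁, hR₁, rfl⟩ := h2 P hP c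
    refine ⟨(ϖ ^ c * Q) * R₁, mul_mem (hAAhat hcQ) hR₁, Q * P₁, mul_mem hQ (hAB hP₁), ?_⟩
    rw [mul_add, hc c Q, mul_assoc, add_comm]
  refine ⟨{ carrier := {z : R | ∃ x ∈ Ahat, ∃ y ∈ B, z = x + y}
            mul_mem' := ?_
            one_mem' := ⟨1, one_mem _, 0, zero_mem _, by simp⟩
            add_mem' := ?_
            zero_mem' := ⟨0, zero_mem _, 0, zero_mem _, by simp⟩
            neg_mem' := ?_ }, rfl⟩
  · rintro _ _ ⟨x, hx, y, hy, rfl⟩ ⟨x', hx', y', hy', rfl⟩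
    obtain ⟨a, ha, b, hb, e⟩ := hPQ x hx y' hy'
    obtain ⟨a', ha', b', hb', e'⟩ := hQP x' hx' y hy
    refine ⟨x * x' + a + a', add_mem (add_mem (mul_mem hx hx') ha) ha',
      y * y' + b + b', add_mem (add_mem (mul_mem hy hy') hb) hb', ?_⟩
    rw [add_mul, mul_add, mul_add, e, e']
    abel
  · rintro _ _ ⟨x, hx, y, hy, rfl⟩ ⟨x', hx', y', hy', rfl⟩
    exact ⟨x + x', add_mem hx hx', y + y', add_mem hy hy', by abel⟩
  · rintro _ ⟨x, hx, y, hy, rfl⟩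
    exact ⟨-x, neg_mem hx, -y, neg_mem hy, by abel⟩
end
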